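/- arXiv:1111.1246 — 5 statements merged into one kernel-verified Lean document; each statement's English description precedes it below -/
import Mathlib

section
/- For all reals α1, α2, α3 with C(α1, α2, α3) = 0, one has (5 − √5)/2 ≤ I(α1, α2, α3) ≤ (5 + √5)/2. Moreover both bounds are attained on the constraint surface: C(3π/5, −π/5, π) = 0 with I(3π/5, −π/5, π) = (5 − √5)/2 (the regular pentagram), and C(π/5, 3π/5, π) = 0 with I(π/5, 3π/5, π) = (5 + √5)/2 (the regular convex pentagon). -/
open Real

/-- The shape-space constraint function in `α`-coordinates. -/
noncomputable def Cα (a1 a2 a3 : ℝ) : ℝ :=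
  3 + 4 * Real.cos a1 * Real.cos a2 + 4 * Real.cos a1 * Real.cos a3
    + 4 * Real.cos a2 * Real.cos a3

/-- The moment of inertia in `α`-coordinates. -/
noncomputable def Iα (a1 a2 a3 : ℝ) : ℝ :=
  4 + 2 * Real.cos a1 * Real.cos a2 + (8 / 5) * Real.cos a1 * Real.cos a3
    + (12 / 5) * Real.cos a2 * Real.cos a3 + (6 / 5) * Real.sin a1 * Real.sin a2

/-- Fourier sum-of-squares identity on the 5-cycle. -/
lemma five_cycle_identity (t x1 x2 x3 x4 x5 : ℝ) (ht : t ^ 2 + t = 1)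
    (h0 : x5 = -(x1 + x2 + x3 + x4)) :
    (2 * t + 1) * (t * (x1 ^ 2 + x2 ^ 2 + x3 ^ 2 + x4 ^ 2 + x5 ^ 2)
      - 2 * (x1 * x2 + x2 * x3 + x3 * x4 + x4 * x5 + x5 * x1))
    = (x5 + x2 - t * x1) ^ 2 + (x1 + x3 - t * x2) ^ 2 + (x2 + x4 - t * x3) ^ 2
      + (x3 + x5 - t * x4) ^ 2 + (x4 + x1 - t * x5) ^ 2 := by
  subst h0
  linear_combination (x1 ^ 2 + x2 ^ 2 + x3 ^ 2 + x4 ^ 2 + (x1 + x2 + x3 + x4) ^ 2) * ht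

lemma inertia_key (t a b c : ℝ) (ht : t ^ 2 + t = 1) (hC : Cα a b c = 0) :
    0 ≤ (2 * t + 1) * (3 + t - Iα a b c) := by
  unfold Cα at hC
  unfold Iα
  have h12 := cos_sub 0 (-(b + c))
  have h13 := cos_sub 0 (-(a + c))
  have h14 := cos_sub 0 (-(a + b))
  have h23 := cos_sub (-(b + c)) (-(a + c))
  have h24 := cos_sub (-(b + c)) (-(a + b))
  have h34 := cos_sub (-(a + c)) (-(a + b))
  rw [show 0 - -(b + c) = b + c by ring, cos_add] at h12
  rw [show 0 - -(a + c) = a + c by ring, cos_add] at h13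
  rw [show 0 - -(a + b) = a + b by ring, cos_add] at h14
  rw [show -(b + c) - -(a + c) = a - b by ring, cos_sub] at h23
  rw [show -(b + c) - -(a + b) = a - c by ring, cos_sub] at h24
  rw [show -(a + c) - -(a + b) = b - c by ring, cos_sub] at h34
  have n1 := sin_sq_add_cos_sq 0
  have n2 := sin_sq_add_cos_sq (-(b + c))
  have n3 := sin_sq_add_cos_sq (-(a + c))
  have n4 := sin_sq_add_cos_sq (-(a + b))
  generalize cos 0 = x1, sin 0 = y1, cos (-(b + c)) = x2, sin (-(b + c)) = y2,
    cos (-(a + c)) = x3, sin (-(a + c)) = y3, cos (-(a + b)) = x4, sin (-(a + b)) = y4 at *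
  have n5 : (-(y1 + y2 + y3 + y4)) ^ 2 + (-(x1 + x2 + x3 + x4)) ^ 2 = 1 := by
    linear_combination n1 + n2 + n3 + n4 - 2 * (h12 + h13 + h14 + h23 + h24 + h34) + hC
  have kx := five_cycle_identity t x1 x2 x3 x4 _ ht rfl
  have ky := five_cycle_identity t y1 y2 y3 y4 _ ht rfl
  have hx : 0 ≤ (2 * t + 1) * (t * (x1 ^ 2 + x2 ^ 2 + x3 ^ 2 + x4 ^ 2 + (-(x1 + x2 + x3 + x4)) ^ 2)
      - 2 * (x1 * x2 + x2 * x3 + x3 * x4 + x4 * (-(x1 + x2 + x3 + x4))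
        + (-(x1 + x2 + x3 + x4)) * x1)) := by
    rw [kx]; positivity
  have hy : 0 ≤ (2 * t + 1) * (t * (y1 ^ 2 + y2 ^ 2 + y3 ^ 2 + y4 ^ 2 + (-(y1 + y2 + y3 + y4)) ^ 2)
      - 2 * (y1 * y2 + y2 * y3 + y3 * y4 + y4 * (-(y1 + y2 + y3 + y4))
        + (-(y1 + y2 + y3 + y4)) * y1)) := by
    rw [ky]; positivity
  have hI : 5 * (4 + 2 * cos a * cos b + (8 / 5) * cos a * cos c
      + (12 / 5) * cos b * cos c + (6 / 5) * sin a * sin b) = 15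
      + 2 * (x1 * x2 + x2 * x3 + x3 * x4 + x4 * (-(x1 + x2 + x3 + x4))
        + (-(x1 + x2 + x3 + x4)) * x1)
      + 2 * (y1 * y2 + y2 * y3 + y3 * y4 + y4 * (-(y1 + y2 + y3 + y4))
        + (-(y1 + y2 + y3 + y4)) * y1) := by
    linear_combination 2 * h23 - 4 * h14 - 2 * h13 - 2 * h24 + 2 * n1 + 2 * n4 + 3 * hC
  have e : (2 * t + 1) * (3 + t - (4 + 2 * cos a * cos b + (8 / 5) * cos a * cos c
      + (12 / 5) * cos b * cos c + (6 / 5) * sin a * sin b)) * 5 =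
      (2 * t + 1) * (t * (x1 ^ 2 + x2 ^ 2 + x3 ^ 2 + x4 ^ 2 + (-(x1 + x2 + x3 + x4)) ^ 2)
      - 2 * (x1 * x2 + x2 * x3 + x3 * x4 + x4 * (-(x1 + x2 + x3 + x4))
        + (-(x1 + x2 + x3 + x4)) * x1)) +
      (2 * t + 1) * (t * (y1 ^ 2 + y2 ^ 2 + y3 ^ 2 + y4 ^ 2 + (-(y1 + y2 + y3 + y4)) ^ 2)
      - 2 * (y1 * y2 + y2 * y3 + y3 * y4 + y4 * (-(y1 + y2 + y3 + y4))
        + (-(y1 + y2 + y3 + y4)) * y1)) := by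
    linear_combination (-(2 * t + 1)) * hI - (2 * t + 1) * t * (n1 + n2 + n3 + n4 + n5)
  linarith

/-- on the constraint surface `C = 0` the moment of inertia lies
between `(5 - √5)/2` and `(5 + √5)/2`, and both bounds are attained: the minimum
at the regular pentagram `(3π/5, -π/5, π)` and the maximum at the regular convex
pentagon `(π/5, 3π/5, π)`. -/
theorem moment_of_inertia_bounds :
    (∀ a1 a2 a3 : ℝ, Cα a1 a2 a3 = 0 →
      (5 - Real.sqrt 5) / 2 ≤ Iα a1 a2 a3 ∧ Iα a1 a2 a3 ≤ (5 + Real.sqrt 5) / 2) ∧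
    Cα (3 * π / 5) (-π / 5) π = 0 ∧ Iα (3 * π / 5) (-π / 5) π = (5 - Real.sqrt 5) / 2 ∧
    Cα (π / 5) (3 * π / 5) π = 0 ∧ Iα (π / 5) (3 * π / 5) π = (5 + Real.sqrt 5) / 2 := by
  have hs : √5 ^ 2 = 5 := Real.sq_sqrt (by norm_num)
  have hp : 0 < √5 := by positivity
  have c1 := Real.cos_pi_div_five
  have c2 : cos (2 * (π / 5)) = (√5 - 1) / 4 := by
    rw [cos_two_mul, c1]; linear_combination hs / 8
  have c3 : cos (3 * π / 5) = -((√5 - 1) / 4) := by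
    rw [show 3 * π / 5 = π - 2 * (π / 5) by ring, cos_pi_sub, c2]
  have s3 : sin (3 * π / 5) = 2 * sin (π / 5) * cos (π / 5) := by
    rw [show 3 * π / 5 = π - 2 * (π / 5) by ring, sin_pi_sub, sin_two_mul]
  have m : -π / 5 = -(π / 5) := by ring
  have s1 := sin_sq_add_cos_sq (π / 5)
  rw [c1] at s1 s3
  have s13 : sin (3 * π / 5) * sin (π / 5) = √5 / 4 := by
    rw [s3]
    linear_combination ((1 + √5) / 2) * s1 - (3 + √5) / 32 * hs
  refine ⟨fun a b c h => ⟨?_, ?_⟩, ?_, ?_, ?_, ?_⟩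
  · have := inertia_key ((-1 - √5) / 2) a b c (by linear_combination hs / 4) h
    nlinarith
  · have := inertia_key ((-1 + √5) / 2) a b c (by linear_combination hs / 4) h
    nlinarith
  · unfold Cα
    rw [m, cos_neg, cos_pi, c1, c3]; linear_combination (-1 / 4) * hs
  · unfold Iα
    rw [m, cos_neg, sin_neg, cos_pi, c1, c3]; linear_combination (-1 / 8) * hs - 6 / 5 * s13
  · unfold Cα
    rw [cos_pi, c1, c3]; linear_combination (-1 / 4) * hs
  · unfold Iα
    rw [cos_pi, c1, c3]; linear_combination (-1 / 8) * hs + 6 / 5 * s13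
end

section
/- Let κ = arccos(7/8) and P = (0, 0, π − κ). Then C(P) = 0, I(P) = 5/2, and P is a critical point of I restricted to the surface C = 0 in the sense of Lagrange multipliers: the gradient of I at P equals (1/2) times the gradient of C at P, where the gradients are taken with respect to (α1, α2, α3). Moreover, for α1 = α2 = 0, C(0, 0, α3) = 0 holds if and only if cos α3 = −7/8. -/
open Real

/-- The constraint as a function on `ℝ × ℝ × ℝ`. -/
noncomputable def Cfun (p : ℝ × ℝ × ℝ) : ℝ := Cα p.1 p.2.1 p.2.2

/-- The moment of inertia as a function on `ℝ × ℝ × ℝ`. -/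
noncomputable def Ifun (p : ℝ × ℝ × ℝ) : ℝ := Iα p.1 p.2.1 p.2.2

/-- with `κ = arccos(7/8)`, the point `P = (0, 0, π - κ)` lies on
the surface `C = 0`, has `I = 5/2`, and is a Lagrange critical point of `I` on
`{C = 0}`: `∇I(P) = (1/2) ∇C(P)`. Moreover `C(0,0,α₃) = 0 ↔ cos α₃ = -7/8`. -/
theorem saddle_point_of_inertia :
    Cα 0 0 (π - Real.arccos (7 / 8)) = 0 ∧
    Iα 0 0 (π - Real.arccos (7 / 8)) = 5 / 2 ∧
    fderiv ℝ Ifun (0, 0, π - Real.arccos (7 / 8)) =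
      (1 / 2 : ℝ) • fderiv ℝ Cfun (0, 0, π - Real.arccos (7 / 8)) ∧
    (∀ a3 : ℝ, Cα 0 0 a3 = 0 ↔ Real.cos a3 = -(7 / 8)) := by
  have hc : Real.cos (π - Real.arccos (7 / 8)) = -(7 / 8) := by
    rw [Real.cos_pi_sub, Real.cos_arccos (by norm_num) (by norm_num)]
  refine ⟨?_, ?_, ?_, ?_⟩
  · simp only [Cα, hc, Real.cos_zero]; norm_num
  · simp only [Iα, hc, Real.cos_zero, Real.sin_zero]; norm_num
  · generalize π - Real.arccos (7 / 8) = t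
    have h1 : HasFDerivAt (fun p : ℝ × ℝ × ℝ => p.1)
        (ContinuousLinearMap.fst ℝ ℝ (ℝ × ℝ)) ((0, 0, t) : ℝ × ℝ × ℝ) := hasFDerivAt_fst
    have h2 : HasFDerivAt (fun p : ℝ × ℝ × ℝ => p.2.1)
        ((ContinuousLinearMap.fst ℝ ℝ ℝ).comp (ContinuousLinearMap.snd ℝ ℝ (ℝ × ℝ)))
        ((0, 0, t) : ℝ × ℝ × ℝ) := ContinuousLinearMap.hasFDerivAt
          ((ContinuousLinearMap.fst ℝ ℝ ℝ).comp (ContinuousLinearMap.snd ℝ ℝ (ℝ × ℝ)))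
    have h3 : HasFDerivAt (fun p : ℝ × ℝ × ℝ => p.2.2)
        ((ContinuousLinearMap.snd ℝ ℝ ℝ).comp (ContinuousLinearMap.snd ℝ ℝ (ℝ × ℝ)))
        ((0, 0, t) : ℝ × ℝ × ℝ) := ContinuousLinearMap.hasFDerivAt
          ((ContinuousLinearMap.snd ℝ ℝ ℝ).comp (ContinuousLinearMap.snd ℝ ℝ (ℝ × ℝ)))
    have hC := ((((h1.cos.const_mul 4).mul h2.cos).const_add 3).add
      ((h1.cos.const_mul 4).mul h3.cos)).add ((h2.cos.const_mul 4).mul h3.cos)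
    have hI := (((((h1.cos.const_mul 2).mul h2.cos).const_add 4).add
      ((h1.cos.const_mul (8 / 5)).mul h3.cos)).add
      ((h2.cos.const_mul (12 / 5)).mul h3.cos)).add
      ((h1.sin.const_mul (6 / 5)).mul h2.sin)
    have eC := HasFDerivAt.fderiv (f := Cfun) hC
    have eI := HasFDerivAt.fderiv (f := Ifun) hI
    rw [eC, eI]
    refine ContinuousLinearMap.ext fun v => ?_
    simp
    ring
  · intro a
    simp only [Cα, Real.cos_zero]
    constructor <;> intro h <;> linarith
end

section
/- Let θ, α1, α2, α3 : ℝ → ℝ be differentiable functions of time t. Define ψ2 = π − α2 − α3, ψ3 = −α1 + α2 − π, ψ4 = π − α2 + α3 (as functions of t) and let z1(t),...,z5(t) be given by the vertex formulas. Then the angular momentum L(t) = Σ_{i=1}^{5} Im(conj(z_i(t)) · z_i'(t)) satisfies L = I·θ' + F̃1·α1' + F̃2·α2' + F̃3·α3', where I = 4 + 2cos α1 cos α2 + (8/5)cos α1 cos α3 + (12/5)cos α2 cos α3 + (6/5)sin α1 sin α2, F̃1 = 2 + cos α1 cos α2 + (4/5)cos α1 cos α3 + (6/5)cos α2 cos α3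 + (3/5)sin α1 sin α2 + (6/5)sin α2 sin α3, F̃2 = 2 + cos α1 cos α2 + (4/5)cos α1 cos α3 + (6/5)cos α2 cos α3 + (3/5)sin α1 sin α2 + (4/5)sin α1 sin α3, and F̃3 = 12/5 + (8/5)cos α1 cos α2 + (4/5)cos α1 cos α3 + (6/5)cos α2 cos α3 + (8/5)sin α1 sin α2, all evaluated at (α1(t), α2(t), α3(t)). -/
open Real

/-- `eang x = e^{i x}` for a real angle `x`. -/
noncomputable def eang (x : ℝ) : ℂ := Complex.exp ((x : ℂ) * Complex.I)

/-- Vertex formula for `z₁`. -/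
noncomputable def z1 (θ ψ2 ψ3 ψ4 : ℝ) : ℂ :=
  (1 / 5) * eang θ *
    (-4 + 3 * eang (-ψ2) - 2 * eang (-(ψ2 + ψ3)) + eang (-(ψ2 + ψ3 + ψ4)))

/-- Vertex formula for `z₂`. -/
noncomputable def z2 (θ ψ2 ψ3 ψ4 : ℝ) : ℂ :=
  (1 / 5) * eang θ *
    (1 + 3 * eang (-ψ2) - 2 * eang (-(ψ2 + ψ3)) + eang (-(ψ2 + ψ3 + ψ4)))

/-- Vertex formula for `z₃`. -/
noncomputable def z3 (θ ψ2 ψ3 ψ4 : ℝ) : ℂ :=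
  (1 / 5) * eang θ *
    (1 - 2 * eang (-ψ2) - 2 * eang (-(ψ2 + ψ3)) + eang (-(ψ2 + ψ3 + ψ4)))

/-- Vertex formula for `z₄`. -/
noncomputable def z4 (θ ψ2 ψ3 ψ4 : ℝ) : ℂ :=
  (1 / 5) * eang θ *
    (1 - 2 * eang (-ψ2) + 3 * eang (-(ψ2 + ψ3)) + eang (-(ψ2 + ψ3 + ψ4)))

/-- Vertex formula for `z₅`. -/
noncomputable def z5 (θ ψ2 ψ3 ψ4 : ℝ) : ℂ :=
  (1 / 5) * eang θ *
    (1 - 2 * eang (-ψ2) + 3 * eang (-(ψ2 + ψ3)) - 4 * eang (-(ψ2 + ψ3 + ψ4)))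

/-- First vertex as a function of time, with the shape given in `α`-coordinates. -/
noncomputable def Zf1 (θ a1 a2 a3 : ℝ → ℝ) (t : ℝ) : ℂ :=
  z1 (θ t) (π - a2 t - a3 t) (-a1 t + a2 t - π) (π - a2 t + a3 t)

/-- Second vertex as a function of time. -/
noncomputable def Zf2 (θ a1 a2 a3 : ℝ → ℝ) (t : ℝ) : ℂ :=
  z2 (θ t) (π - a2 t - a3 t) (-a1 t + a2 t - π) (π - a2 t + a3 t)

/-- Third vertex as a function of time. -/
noncomputable def Zf3 (θ a1 a2 a3 : ℝ → ℝ) (t : ℝ) : ℂ :=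
  z3 (θ t) (π - a2 t - a3 t) (-a1 t + a2 t - π) (π - a2 t + a3 t)

/-- Fourth vertex as a function of time. -/
noncomputable def Zf4 (θ a1 a2 a3 : ℝ → ℝ) (t : ℝ) : ℂ :=
  z4 (θ t) (π - a2 t - a3 t) (-a1 t + a2 t - π) (π - a2 t + a3 t)

/-- Fifth vertex as a function of time. -/
noncomputable def Zf5 (θ a1 a2 a3 : ℝ → ℝ) (t : ℝ) : ℂ :=
  z5 (θ t) (π - a2 t - a3 t) (-a1 t + a2 t - π) (π - a2 t + a3 t)

/-- The angular momentum `L = Σ Im(conj zᵢ · zᵢ')` of the five unit masses. -/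
noncomputable def Lmom (θ a1 a2 a3 : ℝ → ℝ) (t : ℝ) : ℝ :=
  ((starRingEnd ℂ) (Zf1 θ a1 a2 a3 t) * deriv (Zf1 θ a1 a2 a3) t).im
  + ((starRingEnd ℂ) (Zf2 θ a1 a2 a3 t) * deriv (Zf2 θ a1 a2 a3) t).im
  + ((starRingEnd ℂ) (Zf3 θ a1 a2 a3 t) * deriv (Zf3 θ a1 a2 a3) t).im
  + ((starRingEnd ℂ) (Zf4 θ a1 a2 a3 t) * deriv (Zf4 θ a1 a2 a3) t).im
  + ((starRingEnd ℂ) (Zf5 θ a1 a2 a3 t) * deriv (Zf5 θ a1 a2 a3) t).im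

/-- Coefficient `F̃₁`. -/
noncomputable def Ft1 (a1 a2 a3 : ℝ) : ℝ :=
  2 + Real.cos a1 * Real.cos a2 + (4 / 5) * Real.cos a1 * Real.cos a3
    + (6 / 5) * Real.cos a2 * Real.cos a3 + (3 / 5) * Real.sin a1 * Real.sin a2
    + (6 / 5) * Real.sin a2 * Real.sin a3

/-- Coefficient `F̃₂`. -/
noncomputable def Ft2 (a1 a2 a3 : ℝ) : ℝ :=
  2 + Real.cos a1 * Real.cos a2 + (4 / 5) * Real.cos a1 * Real.cos a3
    + (6 / 5) * Real.cos a2 * Real.cos a3 + (3 / 5) * Real.sin a1 * Real.sin a2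
    + (4 / 5) * Real.sin a1 * Real.sin a3

/-- Coefficient `F̃₃`. -/
noncomputable def Ft3 (a1 a2 a3 : ℝ) : ℝ :=
  12 / 5 + (8 / 5) * Real.cos a1 * Real.cos a2 + (4 / 5) * Real.cos a1 * Real.cos a3
    + (6 / 5) * Real.cos a2 * Real.cos a3 + (8 / 5) * Real.sin a1 * Real.sin a2

theorem hasDerivAt_eang_comp (b : ℝ → ℝ) (b' t : ℝ) (hb : HasDerivAt b b' t) :
    HasDerivAt (fun s => eang (b s)) (eang (b t) * ((b' : ℂ) * Complex.I)) t := by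
  unfold eang
  exact (hb.ofReal_comp.mul_const Complex.I).cexp

theorem eang_re (x : ℝ) : (eang x).re = Real.cos x := by
  unfold eang
  exact Complex.exp_ofReal_mul_I_re x

theorem eang_im (x : ℝ) : (eang x).im = Real.sin x := by
  unfold eang
  exact Complex.exp_ofReal_mul_I_im x

theorem eang_add (x y : ℝ) : eang (x + y) = eang x * eang y := by
  unfold eang
  rw [← Complex.exp_add]
  push_cast
  ring_nf

/-- Angular momentum of a point which is a real combination of four rotating unit vectors. -/
theorem momentum_point (Z : ℝ → ℂ) (c1 c2 c3 c4 : ℝ) (b1 b2 b3 b4 : ℝ → ℝ)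
    (d1 d2 d3 d4 t : ℝ) (h1 : HasDerivAt b1 d1 t) (h2 : HasDerivAt b2 d2 t)
    (h3 : HasDerivAt b3 d3 t) (h4 : HasDerivAt b4 d4 t)
    (hZ : ∀ s, Z s = c1 * eang (b1 s) + c2 * eang (b2 s) + c3 * eang (b3 s) + c4 * eang (b4 s)) :
    ((starRingEnd ℂ) (Z t) * deriv Z t).im =
      c1 ^ 2 * d1 + c2 ^ 2 * d2 + c3 ^ 2 * d3 + c4 ^ 2 * d4
      + c1 * c2 * Real.cos (b1 t - b2 t) * (d1 + d2)
      + c1 * c3 * Real.cos (b1 t - b3 t) * (d1 + d3)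
      + c1 * c4 * Real.cos (b1 t - b4 t) * (d1 + d4)
      + c2 * c3 * Real.cos (b2 t - b3 t) * (d2 + d3)
      + c2 * c4 * Real.cos (b2 t - b4 t) * (d2 + d4)
      + c3 * c4 * Real.cos (b3 t - b4 t) * (d3 + d4) := by
  have hd := ((((hasDerivAt_eang_comp b1 d1 t h1).const_mul (c1 : ℂ)).add
    ((hasDerivAt_eang_comp b2 d2 t h2).const_mul (c2 : ℂ))).add
    ((hasDerivAt_eang_comp b3 d3 t h3).const_mul (c3 : ℂ))).add
    ((hasDerivAt_eang_comp b4 d4 t h4).const_mul (c4 : ℂ))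
  have hd' := hd.congr_of_eventuallyEq (f₁ := Z) (Filter.Eventually.of_forall fun s => by
    simp [hZ s])
  rw [hd'.deriv, hZ t]
  simp only [map_add, map_mul, Complex.conj_ofReal, Complex.mul_im, Complex.mul_re,
    Complex.add_re, Complex.add_im, Complex.conj_re, Complex.conj_im, eang_re, eang_im,
    Complex.ofReal_re, Complex.ofReal_im, Complex.I_re, Complex.I_im, Real.cos_sub]
  linear_combination c1 ^ 2 * d1 * Real.sin_sq_add_cos_sq (b1 t)
    + c2 ^ 2 * d2 * Real.sin_sq_add_cos_sq (b2 t)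
    + c3 ^ 2 * d3 * Real.sin_sq_add_cos_sq (b3 t)
    + c4 ^ 2 * d4 * Real.sin_sq_add_cos_sq (b4 t)

/-- along any differentiable motion, the angular momentum decomposes
as `L = I θ' + F̃₁ α₁' + F̃₂ α₂' + F̃₃ α₃'`. -/
theorem angular_momentum_decomposition (θ a1 a2 a3 : ℝ → ℝ)
    (hθ : Differentiable ℝ θ) (h1 : Differentiable ℝ a1)
    (h2 : Differentiable ℝ a2) (h3 : Differentiable ℝ a3) (t : ℝ) :
    Lmom θ a1 a2 a3 t =
      Iα (a1 t) (a2 t) (a3 t) * deriv θ t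
      + Ft1 (a1 t) (a2 t) (a3 t) * deriv a1 t
      + Ft2 (a1 t) (a2 t) (a3 t) * deriv a2 t
      + Ft3 (a1 t) (a2 t) (a3 t) * deriv a3 t := by
  have e0 := (hθ t).hasDerivAt
  have e1 := (h1 t).hasDerivAt
  have e2 := (h2 t).hasDerivAt
  have e3 := (h3 t).hasDerivAt
  have g2 : HasDerivAt (fun s => θ s + (a2 s + a3 s - π)) (deriv θ t + (deriv a2 t + deriv a3 t)) t :=
    e0.add ((e2.add e3).sub_const π)
  have g3 : HasDerivAt (fun s => θ s + (a1 s + a3 s)) (deriv θ t + (deriv a1 t + deriv a3 t)) t :=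
    e0.add (e1.add e3)
  have g4 : HasDerivAt (fun s => θ s + (a1 s + a2 s - π)) (deriv θ t + (deriv a1 t + deriv a2 t)) t :=
    e0.add ((e1.add e2).sub_const π)
  have r2 : ∀ s, -(π - a2 s - a3 s) = a2 s + a3 s - π := fun s => by ring
  have r3 : ∀ s, -(π - a2 s - a3 s + (-a1 s + a2 s - π)) = a1 s + a3 s := fun s => by ring
  have r4 : ∀ s, -(π - a2 s - a3 s + (-a1 s + a2 s - π) + (π - a2 s + a3 s))
      = a1 s + a2 s - π := fun s => by ring
  have p1 := momentum_point (Zf1 θ a1 a2 a3) (-4/5) (3/5) (-2/5) (1/5) _ _ _ _ _ _ _ _ t e0 g2 g3 g4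
    (fun s => by
      simp only [Zf1, z1, r2, r3, r4, eang_add (θ s)]
      push_cast
      ring)
  have p2 := momentum_point (Zf2 θ a1 a2 a3) (1/5) (3/5) (-2/5) (1/5) _ _ _ _ _ _ _ _ t e0 g2 g3 g4
    (fun s => by
      simp only [Zf2, z2, r2, r3, r4, eang_add (θ s)]
      push_cast
      ring)
  have p3 := momentum_point (Zf3 θ a1 a2 a3) (1/5) (-2/5) (-2/5) (1/5) _ _ _ _ _ _ _ _ t e0 g2 g3 g4
    (fun s => by
      simp only [Zf3, z3, r2, r3, r4, eang_add (θ s)]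
      push_cast
      ring)
  have p4 := momentum_point (Zf4 θ a1 a2 a3) (1/5) (-2/5) (3/5) (1/5) _ _ _ _ _ _ _ _ t e0 g2 g3 g4
    (fun s => by
      simp only [Zf4, z4, r2, r3, r4, eang_add (θ s)]
      push_cast
      ring)
  have p5 := momentum_point (Zf5 θ a1 a2 a3) (1/5) (-2/5) (3/5) (-4/5) _ _ _ _ _ _ _ _ t e0 g2 g3 g4
    (fun s => by
      simp only [Zf5, z5, r2, r3, r4, eang_add (θ s)]
      push_cast
      ring)
  have k12 : Real.cos (θ t - (θ t + (a2 t + a3 t - π))) = -Real.cos (a2 t + a3 t) := by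
    rw [← Real.cos_pi_sub]; congr 1; ring
  have k13 : Real.cos (θ t - (θ t + (a1 t + a3 t))) = Real.cos (a1 t + a3 t) := by
    rw [← Real.cos_neg (a1 t + a3 t)]; congr 1; ring
  have k14 : Real.cos (θ t - (θ t + (a1 t + a2 t - π))) = -Real.cos (a1 t + a2 t) := by
    rw [← Real.cos_pi_sub]; congr 1; ring
  have k23 : Real.cos (θ t + (a2 t + a3 t - π) - (θ t + (a1 t + a3 t)))
      = -Real.cos (a2 t - a1 t) := by
    rw [← Real.cos_sub_pi]; congr 1; ring
  have k24 : Real.cos (θ t + (a2 t + a3 t - π) - (θ t + (a1 t + a2 t - π)))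
      = Real.cos (a3 t - a1 t) := by
    congr 1; ring
  have k34 : Real.cos (θ t + (a1 t + a3 t) - (θ t + (a1 t + a2 t - π)))
      = -Real.cos (a3 t - a2 t) := by
    rw [← Real.cos_add_pi]; congr 1; ring
  unfold Lmom
  rw [p1, p2, p3, p4, p5]
  simp only [k12, k13, k14, k23, k24, k34, Real.cos_add, Real.cos_sub, Iα, Ft1, Ft2, Ft3]
  ring
end

section
/- Let p_s = arccos(3√3/(4√2)). For every t ∈ [−p_s, p_s]: cos²t − 3/4 ≥ 0; the quantity χ(t) = −cos t + √(cos²t − 3/4) lies in the open interval (−1, 0); and the point (arccos χ(t), arccos χ(t), −t) lies on the shape-space surface, i.e. C(arccos χ(t), arccos χ(t), −t) = 0. -/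
open Real

/-- `χ(t) = -cos t + √(cos²t - 3/4)`. -/
noncomputable def chi (t : ℝ) : ℝ := -Real.cos t + Real.sqrt (Real.cos t ^ 2 - 3 / 4)

/-- with `p_s = arccos(3√3/(4√2))`, for every `t ∈ [-p_s, p_s]` one
has `cos²t - 3/4 ≥ 0`, `χ(t) ∈ (-1, 0)`, and the point
`(arccos χ(t), arccos χ(t), -t)` lies on the shape-space surface `C = 0`. -/
theorem convexity_boundary_curve (t : ℝ)
    (ht : t ∈ Set.Icc (-Real.arccos (3 * Real.sqrt 3 / (4 * Real.sqrt 2)))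
                      (Real.arccos (3 * Real.sqrt 3 / (4 * Real.sqrt 2)))) :
    0 ≤ Real.cos t ^ 2 - 3 / 4 ∧
    chi t ∈ Set.Ioo (-1 : ℝ) 0 ∧
    Cα (Real.arccos (chi t)) (Real.arccos (chi t)) (-t) = 0 := by
  set k : ℝ := 3 * Real.sqrt 3 / (4 * Real.sqrt 2) with hk
  have hk0 : 0 < k := by positivity
  have hk2 : k ^ 2 = 27 / 32 := by
    rw [hk, div_pow, mul_pow, mul_pow, Real.sq_sqrt (by norm_num), Real.sq_sqrt (by norm_num)]
    norm_num
  have hk1 : k ≤ 1 := by nlinarith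
  have hc : k ≤ Real.cos t := by
    rw [← Real.cos_abs t, ← Real.cos_arccos (by linarith : -1 ≤ k) hk1]
    exact Real.cos_le_cos_of_nonneg_of_le_pi (abs_nonneg t) (Real.arccos_le_pi k)
      (abs_le.mpr ht)
  have hc1 := Real.cos_le_one t
  have hd : 0 < Real.cos t ^ 2 - 3 / 4 := by nlinarith
  have hs := Real.sq_sqrt hd.le
  have hs0 := Real.sqrt_pos.mpr hd
  have h1 : -1 < chi t := by unfold chi; linarith
  have h2 : chi t < 0 := by unfold chi; nlinarith
  refine ⟨hd.le, ⟨h1, h2⟩, ?_⟩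
  unfold Cα
  rw [Real.cos_arccos h1.le (by linarith), Real.cos_neg]
  unfold chi
  linear_combination 4 * hs
end

section
/- Let ψ2, ψ3, ψ4 be reals with ψ2 = ψ4. Define ψ5 = −Arg(1 − e^{iψ4} + e^{i(ψ3+ψ4)} − e^{i(ψ2+ψ3+ψ4)}) and ψ1 = Arg(1 − e^{−iψ2} + e^{−i(ψ2+ψ3)} − e^{−i(ψ2+ψ3+ψ4)}). Then ψ1 ≡ ψ5 (mod 2π). (Thus shapes with ψ2 = ψ4 are reflection-symmetric: ψ1 = ψ5 and ψ2 = ψ4.) -/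
open Real

/-- if `ψ₂ = ψ₄` then the derived relative angles
`ψ₁ = Arg(1 - e^{-iψ₂} + e^{-i(ψ₂+ψ₃)} - e^{-i(ψ₂+ψ₃+ψ₄)})` and
`ψ₅ = -Arg(1 - e^{iψ₄} + e^{i(ψ₃+ψ₄)} - e^{i(ψ₂+ψ₃+ψ₄)})` agree modulo `2π`;
such shapes are reflection symmetric. -/
theorem reflection_symmetric_shape (ψ2 ψ3 ψ4 : ℝ) (h : ψ2 = ψ4) :
    ∃ k : ℤ,
      Complex.arg (1 - eang (-ψ2) + eang (-(ψ2 + ψ3)) - eang (-(ψ2 + ψ3 + ψ4)))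
        - -Complex.arg (1 - eang ψ4 + eang (ψ3 + ψ4) - eang (ψ2 + ψ3 + ψ4))
        = 2 * π * k := by
  subst h
  have hc : ∀ x : ℝ, eang (-x) = (starRingEnd ℂ) (eang x) := by
    intro x
    simp [eang, ← Complex.exp_conj]
  have e : 1 - eang (-ψ2) + eang (-(ψ2 + ψ3)) - eang (-(ψ2 + ψ3 + ψ2))
      = (starRingEnd ℂ) (1 - eang ψ2 + eang (ψ3 + ψ2) - eang (ψ2 + ψ3 + ψ2)) := by
    simp only [hc, map_sub, map_add, map_one, add_comm ψ3 ψ2]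
  rw [e, Complex.arg_conj]
  split_ifs with hπ
  · exact ⟨1, by rw [hπ]; push_cast; ring⟩
  · exact ⟨0, by push_cast; ring⟩
end
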